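/- Let n be odd, n ≥ 1, and in S_{2n} let ρ be the involution pairing 2k with 2k+1, C_ρ its centralizer, β the 2n-cycle x ↦ x+1 (mod 2n), and r the order-reversing involution x ↦ 2n−1−x. Then for every σ ∈ β·C_ρ and every integer p, one has β^{2p}·σ·β^{−2p} ≠ σ·ρ and β^{2p}·σ·β^{−2p} ≠ r·β⁻¹·ρ·σ⁻¹·β·r; in other words, no element of U = β·C_ρ is conjugate by a power of β² to its mirror image σ_m = σ·ρ, nor to its swap-reversal image σ_{sr} = r·β⁻¹·ρ·σ⁻¹·β·r. -/

import Mathlib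

/-- The fixed-point-free involution of `Fin (2n)` pairing `2k` with `2k+1`. -/
def rho (n : ℕ) : Equiv.Perm (Fin (2 * n)) :=
  Function.Involutive.toPerm
    (fun x => ⟨if x.val % 2 = 0 then x.val + 1 else x.val - 1, by
      have := x.isLt; split_ifs with h <;> omega⟩)
    (by
      intro x
      have hx := x.isLt
      apply Fin.ext
      dsimp only
      split_ifs <;> omega)

/-- The order-reversing involution `x ↦ 2n - 1 - x` of `Fin (2n)`. -/
def rev (n : ℕ) : Equiv.Perm (Fin (2 * n)) :=
  Function.Involutive.toPerm
    (fun x => ⟨2 * n - 1 - x.val, by have := x.isLt; omega⟩)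
    (by
      intro x
      have hx := x.isLt
      apply Fin.ext
      dsimp only
      omega)

/-!
Conjugate permutations have the same sign, and both `σ ρ` and `r β⁻¹ ρ σ⁻¹ β r` have the sign of `σ`
times that of `ρ`: in the second product `r` and `β` each contribute their sign twice. For `n` odd,
`ρ` is a product of `n` disjoint transpositions, hence odd, so both images have the sign opposite to
that of `σ`.
-/

section OddPerm

open Equiv.Perm (sign)

variable {α : Type*} [Fintype α] [DecidableEq α]

theorem not_isConj_of_sign_eq_neg {σ τ : Equiv.Perm α} (h : sign τ = -sign σ) :
    ¬ IsConj σ τ := by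
  intro hconj
  have sign_eq : sign σ = sign τ := isConj_iff_eq.1 (sign.map_isConj hconj)
  exact units_ne_neg_self _ (sign_eq.trans h)

theorem sign_swapReversal (σ ρ β r : Equiv.Perm α) :
    sign (r * β⁻¹ * ρ * σ⁻¹ * β * r) = sign ρ * sign σ := by
  calc sign (r * β⁻¹ * ρ * σ⁻¹ * β * r)
      = (sign r * sign r) * (sign β * sign β) * (sign ρ * sign σ) := by
        simp only [Equiv.Perm.sign_mul, Equiv.Perm.sign_inv]
        ac_rfl
    _ = sign ρ * sign σ := by simp only [Int.units_mul_self, one_mul]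

theorem mirror_swapReversal_never_symmetry_odd_general {ρ : Equiv.Perm α} (hρ : sign ρ = -1)
    (σ β r : Equiv.Perm α) :
    ¬ IsConj σ (σ * ρ) ∧ ¬ IsConj σ (r * β⁻¹ * ρ * σ⁻¹ * β * r) := by
  constructor <;> apply not_isConj_of_sign_eq_neg
  · rw [Equiv.Perm.sign_mul, hρ, mul_neg_one]
  · rw [sign_swapReversal, hρ, neg_one_mul]

end OddPerm

section SignRho

variable (n : ℕ)

/-- The bijection `(k, b) ↦ 2k + b`, under which `rho n` becomes the swap of the two values of `b`,
for every `k`. -/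
def pairEquiv : Fin n × Fin 2 ≃ Fin (2 * n) :=
  finProdFinEquiv.trans (finCongr (Nat.mul_comm n 2))

theorem val_pairEquiv (k : Fin n) (b : Fin 2) : (pairEquiv n (k, b)).val = b + 2 * k := rfl

theorem val_rho (x : Fin (2 * n)) :
    (rho n x).val = if x.val % 2 = 0 then x.val + 1 else x.val - 1 := rfl

theorem pairEquiv_swap (k : Fin n) (b : Fin 2) :
    pairEquiv n (k, Equiv.swap 0 1 b) = rho n (pairEquiv n (k, b)) := by
  apply Fin.ext
  rw [val_rho, val_pairEquiv, val_pairEquiv]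
  fin_cases b
  · simp [add_comm]
  · simp

theorem sign_rho : Equiv.Perm.sign (rho n) = (-1) ^ n := by
  let swapAll : Equiv.Perm (Fin n × Fin 2) := Equiv.prodCongrRight fun _ => Equiv.swap 0 1
  calc Equiv.Perm.sign (rho n)
      = Equiv.Perm.sign swapAll :=
        (Equiv.Perm.sign_eq_sign_of_equiv swapAll (rho n) (pairEquiv n)
          fun ⟨k, b⟩ => pairEquiv_swap n k b).symm
    _ = ∏ _k : Fin n, Equiv.Perm.sign (Equiv.swap (0 : Fin 2) 1) :=
        Equiv.Perm.sign_prodCongrRight _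
    _ = (-1) ^ n := by simp

end SignRho

/-- For n odd, no element σ of the coset U = β·C_ρ is conjugate by a power of β² to
its mirror image σ_m = σ·ρ, nor to its swap-reversal image σ_{sr} = r·β⁻¹·ρ·σ⁻¹·β·r. -/
theorem mirror_swapReversal_never_symmetry_odd (n : ℕ) (hn : 1 ≤ n) (hodd : Odd n)
    (σ : Equiv.Perm (Fin (2 * n)))
    (hσ : ∃ ξ ∈ Subgroup.centralizer {rho n}, σ = finRotate (2 * n) * ξ) (p : ℤ) :
    finRotate (2 * n) ^ (2 * p) * σ * (finRotate (2 * n) ^ (2 * p))⁻¹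
        ≠ σ * rho n ∧
    finRotate (2 * n) ^ (2 * p) * σ * (finRotate (2 * n) ^ (2 * p))⁻¹
        ≠ rev n * (finRotate (2 * n))⁻¹ * rho n * σ⁻¹ * finRotate (2 * n) * rev n := by
  have sign_rho_odd : Equiv.Perm.sign (rho n) = -1 := (sign_rho n).trans hodd.neg_one_pow
  have ⟨not_mirror, not_swapReversal⟩ := mirror_swapReversal_never_symmetry_odd_general
    sign_rho_odd σ (finRotate (2 * n)) (rev n)
  exact ⟨fun h => not_mirror (isConj_iff.2 ⟨_, h⟩), fun h => not_swapReversal (isConj_iff.2 ⟨_, h⟩)⟩
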